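/- Let ψ be a positive probability density on (0,∞), let f and g be non-negative measurable functions with ∫₀^∞ f(x) dx < ∞ and ∫₀^∞ g(x) dx < ∞, and let α, β > 0. Then D(αf + βg | ψ) < ∞ if and only if D(f | ψ) < ∞ and D(g | ψ) < ∞. -/

import Mathlib

open MeasureTheory Set
open scoped ENNReal

/-- `L x = x * log x` (with `L 0 = 0`, automatic since `Real.log 0 = 0`). -/
noncomputable def L (x : ℝ) : ℝ := x * Real.log x

/-- The relative entropy `D(f | ψ) = ∫₀^∞ L (f x / ψ x) * ψ x dx`, with values in
`(-∞, ∞]`, realized in `EReal`.  Since `L t ≥ -e⁻¹` for `t ≥ 0`, for a probability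
density `ψ` on `(0,∞)` the integrand shifted by `e⁻¹ * ψ` is nonnegative, so this
is faithfully computed by a Lebesgue integral shifted back by `e⁻¹`. -/
noncomputable def relEnt (f ψ : ℝ → ℝ) : EReal :=
  ((∫⁻ x in Ioi (0 : ℝ),
      ENNReal.ofReal (L (f x / ψ x) * ψ x + Real.exp (-1) * ψ x) : ℝ≥0∞) : EReal)
    - ((Real.exp (-1) : ℝ) : EReal)

lemma L_lower (t : ℝ) (ht : 0 ≤ t) : 0 ≤ L t + Real.exp (-1) := by
  rcases ht.eq_or_lt with rfl | ht
  · simp [L]; positivity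
  · have h := Real.add_one_le_exp (-1 - Real.log t)
    have h2 : Real.exp (-1 - Real.log t) = Real.exp (-1) / t := by
      rw [Real.exp_sub, Real.exp_log ht]
    rw [h2, le_div_iff₀ ht] at h
    unfold L
    linarith

lemma L_smul (a t : ℝ) (ha : 0 < a) (ht : 0 ≤ t) :
    L (a * t) = a * L t + a * Real.log a * t := by
  rcases ht.eq_or_lt with rfl | ht
  · simp [L]
  · unfold L
    rw [Real.log_mul ha.ne' ht.ne']; ring

lemma L_le_add (u v : ℝ) (hu : 0 ≤ u) (hv : 0 ≤ v) : L u ≤ L (u + v) + Real.exp (-1) := by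
  have h0 := L_lower (u + v) (by positivity)
  by_cases h : 1 ≤ u
  · have h1 : L u ≤ L (u + v) := by
      unfold L
      have := Real.log_nonneg h
      have := Real.log_le_log (by linarith : 0 < u) (by linarith : u ≤ u + v)
      gcongr
      linarith
    have := Real.exp_pos (-1)
    linarith
  · have : L u ≤ 0 := mul_nonpos_of_nonneg_of_nonpos hu (Real.log_nonpos hu (by linarith))
    linarith

lemma L_add_le (u v : ℝ) (hu : 0 ≤ u) (hv : 0 ≤ v) :
    L (u + v) ≤ L u + L v + Real.log 2 * (u + v) := by
  have hc := Real.convexOn_mul_log.2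
  have h := hc (show 2 * u ∈ Ici (0 : ℝ) by simpa using hu)
    (show 2 * v ∈ Ici (0 : ℝ) by simpa using hv)
    (show (0 : ℝ) ≤ 1/2 by norm_num) (show (0 : ℝ) ≤ 1/2 by norm_num) (by norm_num)
  have e : (1/2 : ℝ) • (2 * u) + (1/2 : ℝ) • (2 * v) = u + v := by
    simp only [smul_eq_mul]; ring
  rw [e] at h
  have h1 := L_smul 2 u (by norm_num) hu
  have h2 := L_smul 2 v (by norm_num) hv
  simp only [smul_eq_mul] at h
  unfold L at *
  linarith

lemma relEnt_lt_top_iff (f ψ : ℝ → ℝ) : relEnt f ψ < ⊤ ↔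
    (∫⁻ x in Ioi (0 : ℝ),
      ENNReal.ofReal (L (f x / ψ x) * ψ x + Real.exp (-1) * ψ x)) < ⊤ := by
  unfold relEnt
  generalize (∫⁻ x in Ioi (0 : ℝ),
      ENNReal.ofReal (L (f x / ψ x) * ψ x + Real.exp (-1) * ψ x)) = I
  induction I using ENNReal.recTopCoe with
  | top => simp
  | coe r =>
    simp only [ENNReal.coe_lt_top, iff_true]
    exact EReal.coe_lt_top ((r : ℝ) - Real.exp (-1))

lemma relEnt_of_le (f ψ H : ℝ → ℝ) (hψint : IntegrableOn ψ (Ioi (0 : ℝ)))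
    (hH : IntegrableOn H (Ioi (0 : ℝ)))
    (hle : ∀ x ∈ Ioi (0 : ℝ), L (f x / ψ x) * ψ x ≤ H x) : relEnt f ψ < ⊤ := by
  rw [relEnt_lt_top_iff]
  have hi : IntegrableOn (fun x => H x + Real.exp (-1) * ψ x) (Ioi (0 : ℝ)) :=
    hH.add (hψint.const_mul _)
  refine lt_of_le_of_lt (setLIntegral_mono' measurableSet_Ioi fun x hx => ?_)
    (Integrable.lintegral_lt_top hi)
  exact ENNReal.ofReal_le_ofReal (by linarith [hle x hx])

lemma integrable_of_relEnt (f ψ : ℝ → ℝ) (hψmeas : Measurable ψ)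
    (hψpos : ∀ x ∈ Ioi (0 : ℝ), 0 < ψ x)
    (hψint : IntegrableOn ψ (Ioi (0 : ℝ)))
    (hfmeas : Measurable f) (hf0 : ∀ x, 0 ≤ f x) (h : relEnt f ψ < ⊤) :
    IntegrableOn (fun x => L (f x / ψ x) * ψ x) (Ioi (0 : ℝ)) := by
  rw [relEnt_lt_top_iff] at h
  have hm : Measurable (fun x => L (f x / ψ x) * ψ x + Real.exp (-1) * ψ x) := by
    unfold L
    fun_prop
  have hi : IntegrableOn (fun x => L (f x / ψ x) * ψ x + Real.exp (-1) * ψ x)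
      (Ioi (0 : ℝ)) := by
    refine (lintegral_ofReal_ne_top_iff_integrable hm.aestronglyMeasurable ?_).1 h.ne
    filter_upwards [ae_restrict_mem measurableSet_Ioi] with x hx
    have := L_lower (f x / ψ x) (div_nonneg (hf0 x) (hψpos x hx).le)
    have := mul_nonneg this (hψpos x hx).le
    simp only [Pi.zero_apply]
    linarith
  have := hi.sub (hψint.const_mul (Real.exp (-1)))
  refine this.congr_fun (fun x _ => ?_) measurableSet_Ioi
  simp

lemma relEnt_of_add (ψ : ℝ → ℝ) (hψmeas : Measurable ψ)
    (hψpos : ∀ x ∈ Ioi (0 : ℝ), 0 < ψ x)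
    (hψint : IntegrableOn ψ (Ioi (0 : ℝ)))
    (f g : ℝ → ℝ)
    (hfmeas : Measurable f) (hf0 : ∀ x, 0 ≤ f x)
    (hfint : IntegrableOn f (Ioi (0 : ℝ)))
    (hgmeas : Measurable g) (hg0 : ∀ x, 0 ≤ g x)
    (α β : ℝ) (hα : 0 < α) (hβ : 0 < β)
    (h : relEnt (fun x => α * f x + β * g x) ψ < ⊤) : relEnt f ψ < ⊤ := by
  have hi := integrable_of_relEnt _ ψ hψmeas hψpos hψint (by fun_prop)
    (fun x => by have := hf0 x; have := hg0 x; positivity) h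
  refine relEnt_of_le f ψ (fun x => α⁻¹ * (L ((α * f x + β * g x) / ψ x) * ψ x
      + Real.exp (-1) * ψ x) - Real.log α * f x) hψint
    (((hi.add (hψint.const_mul _)).const_mul _).sub (hfint.const_mul _)) fun x hx => ?_
  have hp := hψpos x hx
  have hu : 0 ≤ f x / ψ x := div_nonneg (hf0 x) hp.le
  have hv : 0 ≤ g x / ψ x := div_nonneg (hg0 x) hp.le
  have h1 := L_le_add (α * (f x / ψ x)) (β * (g x / ψ x)) (by positivity) (by positivity)
  rw [L_smul _ _ hα hu] at h1
  have e : α * (f x / ψ x) + β * (g x / ψ x) = (α * f x + β * g x) / ψ x := by ring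
  rw [e] at h1
  have h2 := mul_le_mul_of_nonneg_right h1 hp.le
  have h3 := mul_le_mul_of_nonneg_left h2 (inv_pos.2 hα).le
  have ef : f x = f x / ψ x * ψ x := by field_simp
  have e3 : α⁻¹ * ((α * L (f x / ψ x) + α * Real.log α * (f x / ψ x)) * ψ x)
      = L (f x / ψ x) * ψ x + Real.log α * f x := by
    field_simp
  rw [e3, add_mul] at h3
  linarith

theorem stmt8 (ψ : ℝ → ℝ) (hψmeas : Measurable ψ)
    (hψpos : ∀ x ∈ Ioi (0 : ℝ), 0 < ψ x)
    (hψint : IntegrableOn ψ (Ioi (0 : ℝ)))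
    (hψprob : ∫ x in Ioi (0 : ℝ), ψ x = 1)
    (f g : ℝ → ℝ)
    (hfmeas : Measurable f) (hf0 : ∀ x, 0 ≤ f x)
    (hfint : IntegrableOn f (Ioi (0 : ℝ)))
    (hgmeas : Measurable g) (hg0 : ∀ x, 0 ≤ g x)
    (hgint : IntegrableOn g (Ioi (0 : ℝ)))
    (α β : ℝ) (hα : 0 < α) (hβ : 0 < β) :
    relEnt (fun x => α * f x + β * g x) ψ < ⊤ ↔
      relEnt f ψ < ⊤ ∧ relEnt g ψ < ⊤ := by
  constructor
  · intro h
    refine ⟨relEnt_of_add ψ hψmeas hψpos hψint f g hfmeas hf0 hfint hgmeas hg0 α β hα hβ h,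
      relEnt_of_add ψ hψmeas hψpos hψint g f hgmeas hg0 hgint hfmeas hf0 β α hβ hα ?_⟩
    simpa only [add_comm] using h
  · rintro ⟨h1, h2⟩
    have i1 := integrable_of_relEnt f ψ hψmeas hψpos hψint hfmeas hf0 h1
    have i2 := integrable_of_relEnt g ψ hψmeas hψpos hψint hgmeas hg0 h2
    refine relEnt_of_le _ ψ (fun x => (α * (L (f x / ψ x) * ψ x) + β * (L (g x / ψ x) * ψ x))
      + (α * (Real.log α + Real.log 2) * f x + β * (Real.log β + Real.log 2) * g x)) hψint
      (((i1.const_mul _).add (i2.const_mul _)).add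
        ((hfint.const_mul _).add (hgint.const_mul _))) fun x hx => ?_
    have hp := hψpos x hx
    have hu : 0 ≤ f x / ψ x := div_nonneg (hf0 x) hp.le
    have hv : 0 ≤ g x / ψ x := div_nonneg (hg0 x) hp.le
    have h1 := L_add_le (α * (f x / ψ x)) (β * (g x / ψ x)) (by positivity) (by positivity)
    rw [L_smul _ _ hα hu, L_smul _ _ hβ hv] at h1
    have e : α * (f x / ψ x) + β * (g x / ψ x) = (α * f x + β * g x) / ψ x := by ring
    have h2 := mul_le_mul_of_nonneg_right h1 hp.le
    rw [e] at h2
    refine h2.trans (le_of_eq ?_)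
    field_simp
    ring
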